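/- For all integers n, m with 0 < m < n and every vector a = (a_1,…,a_n) ∈ ℝ^n, the scaling basis satisfies the uniform Riesz bounds: max_{1≤k≤n} |a_k| ≤ sup_{|x|≤1} |Σ_{k=1}^{n} a_k Φ_{n,k}^m(x)| ≤ c_∞·(1 + 2π·(n+m−1)/n)·max_{1≤k≤n} |a_k|, where c_∞ = max_{|x|≤1} ∫_{−1}^{1} |v_n^m(x,y)| w(y) dy. -/

import Mathlib

open Real MeasureTheory Finset

/-- Chebyshev nodes of the first kind: `x_k^n = cos((2k-1)π/(2n))`. -/
noncomputable def chebNode (n k : ℕ) : ℝ :=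
  Real.cos ((2 * (k : ℝ) - 1) * Real.pi / (2 * (n : ℝ)))

/-- Orthonormal Chebyshev polynomials of the first kind. -/
noncomputable def chebP (r : ℕ) (x : ℝ) : ℝ :=
  if r = 0 then Real.sqrt (1 / Real.pi)
  else Real.sqrt (2 / Real.pi) * Real.cos ((r : ℝ) * Real.arccos x)

/-- Darboux kernel `K_r(x,y) = Σ_{s=0}^r p_s(x) p_s(y)`. -/
noncomputable def darboux (r : ℕ) (x y : ℝ) : ℝ :=
  ∑ s ∈ Finset.range (r + 1), chebP s x * chebP s y

/-- de la Vallée Poussin kernel `v_n^m(x,y) = (1/(2m)) Σ_{r=n-m}^{n+m-1} K_r(x,y)`. -/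
noncomputable def vpK (n m : ℕ) (x y : ℝ) : ℝ :=
  (1 / (2 * (m : ℝ))) * ∑ r ∈ Finset.Icc (n - m) (n + m - 1), darboux r x y

/-- The Chebyshev weight `w(x) = 1/√(1-x²)`. -/
noncomputable def chebW (x : ℝ) : ℝ := 1 / Real.sqrt (1 - x ^ 2)

/-- Scaling functions `Φ_{n,k}^m(x) = (π/n) v_n^m(x_k^n, x)`. -/
noncomputable def scal (n m k : ℕ) (x : ℝ) : ℝ :=
  (Real.pi / (n : ℝ)) * vpK n m (chebNode n k) x

/-- The nodes `y_k^n`, `k = 1,…,2n`: the Chebyshev nodes of order `3n` not of order `n`. -/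
noncomputable def yNode (n k : ℕ) : ℝ := chebNode (3 * n) (3 * k / 2)

/-- Wavelet functions `ψ_{n,k}^m`. -/
noncomputable def wav (n m k : ℕ) (x : ℝ) : ℝ :=
  (Real.pi / (3 * (n : ℝ))) * vpK (3 * n) m (yNode n k) x -
    ∑ h ∈ Finset.Icc 1 n,
      scal n m h (yNode n k) * ((Real.pi / (3 * (n : ℝ))) * vpK (3 * n) m (chebNode n h) x)

/-- Filter coefficients `μ_{n,r}^m`. -/
noncomputable def muC (n m r : ℕ) : ℝ :=
  if r ≤ n - m then 1
  else if r < n + m then ((m : ℝ) + (n : ℝ) - (r : ℝ)) / (2 * (m : ℝ))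
  else 0

/-- Squared norms `ν_{n,r}^m` of the orthogonal scaling basis. -/
noncomputable def nuC (n m r : ℕ) : ℝ :=
  if r ≤ n - m then 1 else ((m : ℝ) ^ 2 + ((n : ℝ) - (r : ℝ)) ^ 2) / (2 * (m : ℝ) ^ 2)

/-- Orthogonal scaling basis `Φ_{n,r}^⊥`. -/
noncomputable def scalPerp (n m r : ℕ) (x : ℝ) : ℝ :=
  if r ≤ n - m then chebP r x
  else muC n m r * chebP r x - muC n m (2 * n - r) * chebP (2 * n - r) x

/-- The sup norm on `[-1,1]`. -/
noncomputable def supNorm (f : ℝ → ℝ) : ℝ := ⨆ x : Set.Icc (-1 : ℝ) 1, |f x|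

/-- The Lebesgue constant `c_∞ = max_{|x|≤1} ∫_{-1}^1 |v_n^m(x,y)| w(y) dy`. -/
noncomputable def cInf (n m : ℕ) : ℝ :=
  ⨆ x : Set.Icc (-1 : ℝ) 1, ∫ y in (-1 : ℝ)..1, |vpK n m x y| * chebW y



/-- Trigonometric form of the Darboux kernel (times `π`). -/
noncomputable def trigB (r : ℕ) (t u : ℝ) : ℝ :=
  1 + 2 * ∑ l ∈ Finset.range r, Real.cos (((l + 1 : ℕ) : ℝ) * t) * Real.cos (((l + 1 : ℕ) : ℝ) * u)

/-- Dirichlet kernel. -/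
noncomputable def dirK (r : ℕ) (t : ℝ) : ℝ :=
  1 + 2 * ∑ l ∈ Finset.range r, Real.cos (((l + 1 : ℕ) : ℝ) * t)

lemma trigB_eq_dirK (r : ℕ) (t u : ℝ) : trigB r t u = (dirK r (t - u) + dirK r (t + u)) / 2 := by
  have : ∀ l : ℕ, Real.cos ((l : ℝ) * t) * Real.cos ((l : ℝ) * u)
      = (Real.cos ((l : ℝ) * (t - u)) + Real.cos ((l : ℝ) * (t + u))) / 2 := by
    intro l
    rw [mul_sub, mul_add, Real.cos_sub, Real.cos_add]; ring
  unfold trigB dirK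
  simp only [this, ← Finset.sum_div, Finset.sum_add_distrib]
  ring

lemma trigB_succ (r : ℕ) (t u : ℝ) : trigB (r + 1) t u =
    trigB r t u + 2 * (Real.cos (((r + 1 : ℕ) : ℝ) * t) * Real.cos (((r + 1 : ℕ) : ℝ) * u)) := by
  unfold trigB; rw [Finset.sum_range_succ]; ring

lemma trigB_comm (r : ℕ) (t u : ℝ) : trigB r t u = trigB r u t := by
  unfold trigB
  congr 2
  exact Finset.sum_congr rfl fun _ _ => mul_comm _ _

lemma dirK_sin (r : ℕ) (t : ℝ) :
    Real.sin (t / 2) * dirK r t = Real.sin ((r : ℝ) * t + t / 2) := by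
  induction r with
  | zero => simp [dirK]
  | succ r ih =>
    have : dirK (r + 1) t = dirK r t + 2 * Real.cos (((r + 1 : ℕ) : ℝ) * t) := by
      unfold dirK; rw [Finset.sum_range_succ]; ring
    rw [this, mul_add, ih]
    have e1 : (r : ℝ) * t + t / 2 = ((r + 1 : ℕ) : ℝ) * t - t / 2 := by push_cast; ring
    rw [e1, Real.sin_sub, Real.sin_add]; ring

lemma fejer_eq (M : ℕ) (t : ℝ) : ∑ r ∈ Finset.range M, dirK r t =
    (∑ j ∈ Finset.range M, Real.cos ((j : ℝ) * t)) ^ 2 +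
      (∑ j ∈ Finset.range M, Real.sin ((j : ℝ) * t)) ^ 2 := by
  induction M with
  | zero => simp
  | succ M ih =>
    rw [Finset.sum_range_succ, ih, Finset.sum_range_succ, Finset.sum_range_succ]
    have h : ∑ l ∈ Finset.range M, Real.cos (((l + 1 : ℕ) : ℝ) * t) =
        (∑ j ∈ Finset.range M, Real.cos ((j : ℝ) * t)) * Real.cos ((M : ℝ) * t) +
        (∑ j ∈ Finset.range M, Real.sin ((j : ℝ) * t)) * Real.sin ((M : ℝ) * t) := by
      rw [← Finset.sum_range_reflect, Finset.sum_mul, Finset.sum_mul, ← Finset.sum_add_distrib]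
      apply Finset.sum_congr rfl
      intro j hj
      have hj' := Finset.mem_range.mp hj
      have : ((M - 1 - j + 1 : ℕ) : ℝ) = (M : ℝ) - j := by
        rw [show M - 1 - j + 1 = M - j by omega, Nat.cast_sub hj'.le]
      rw [this, sub_mul, Real.cos_sub]; ring
    unfold dirK
    rw [h]
    have := Real.sin_sq_add_cos_sq ((M : ℝ) * t)
    linear_combination -this

lemma fejer_nonneg (M : ℕ) (t u : ℝ) : 0 ≤ ∑ r ∈ Finset.range M, trigB r t u := by
  simp only [trigB_eq_dirK, ← Finset.sum_div, Finset.sum_add_distrib, fejer_eq]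
  positivity

/-- angle of the node -/
noncomputable def nodeA (n k : ℕ) : ℝ := (2 * (k : ℝ) - 1) * Real.pi / (2 * (n : ℝ))

lemma node_cos_sum (n l : ℕ) (hn : 0 < n) :
    Real.sin ((l : ℝ) * Real.pi / (2 * n)) * ∑ k ∈ Finset.Icc 1 n, Real.cos ((l : ℝ) * nodeA n k) = 0 := by
  have key : ∀ N : ℕ, 2 * (Real.sin ((l : ℝ) * Real.pi / (2 * n)) *
      ∑ k ∈ Finset.Icc 1 N, Real.cos ((l : ℝ) * nodeA n k)) = Real.sin ((l : ℝ) * N * Real.pi / n) := by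
    have hn' : (n : ℝ) ≠ 0 := by positivity
    intro N
    induction N with
    | zero => simp
    | succ N ih =>
      rw [Finset.sum_Icc_succ_top (by omega), mul_add, mul_add, ih]
      have e1 : (l : ℝ) * N * Real.pi / n = (l : ℝ) * nodeA n (N + 1) - (l : ℝ) * Real.pi / (2 * n) := by
        unfold nodeA; push_cast; field_simp; ring
      have e2 : (l : ℝ) * ((N + 1 : ℕ) : ℝ) * Real.pi / n = (l : ℝ) * nodeA n (N + 1) + (l : ℝ) * Real.pi / (2 * n) := by
        unfold nodeA; push_cast; field_simp; ring
      rw [e1, e2, Real.sin_sub, Real.sin_add]; ring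
  have := key n
  rw [show (l : ℝ) * n * Real.pi / n = l * Real.pi by field_simp, Real.sin_nat_mul_pi] at this
  linarith

lemma sin_int_ne (n : ℕ) (hn : 0 < n) (j : ℤ) (hj : ¬ (2 * (n : ℤ)) ∣ j) :
    Real.sin ((j : ℝ) * Real.pi / (2 * n)) ≠ 0 := by
  intro h
  rw [Real.sin_eq_zero_iff] at h
  obtain ⟨q, hq⟩ := h
  have hn' : (n : ℝ) ≠ 0 := by positivity
  have hpi := Real.pi_ne_zero
  field_simp at hq
  apply hj
  refine ⟨q, ?_⟩
  have : (j : ℝ) = ((2 * n * q : ℤ) : ℝ) := by push_cast; linarith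
  exact_mod_cast this

lemma node_cos_sum_zero (n l : ℕ) (hn : 0 < n) (hl : ¬ 2 * n ∣ l) :
    ∑ k ∈ Finset.Icc 1 n, Real.cos ((l : ℝ) * nodeA n k) = 0 := by
  have h := sin_int_ne n hn (l : ℤ) (by exact_mod_cast hl)
  have h2 := node_cos_sum n l hn
  rw [Int.cast_natCast] at h
  exact (mul_eq_zero.mp h2).resolve_left h

lemma node_cos_sum_two (n : ℕ) (hn : 0 < n) :
    ∑ k ∈ Finset.Icc 1 n, Real.cos (((2 * n : ℕ) : ℝ) * nodeA n k) = -n := by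
  have hn' : (n : ℝ) ≠ 0 := by positivity
  have : ∀ k ∈ Finset.Icc 1 n, Real.cos (((2 * n : ℕ) : ℝ) * nodeA n k) = -1 := by
    intro k _
    have e : ((2 * n : ℕ) : ℝ) * nodeA n k = (k : ℝ) * (2 * Real.pi) - Real.pi := by
      unfold nodeA; push_cast; field_simp
    rw [e, Real.cos_sub_pi, Real.cos_nat_mul_two_pi]
  rw [Finset.sum_congr rfl this]; simp

lemma node_trigB_sum_small (n r : ℕ) (hn : 0 < n) (hr : r < 2 * n) (u : ℝ) :
    ∑ k ∈ Finset.Icc 1 n, trigB r (nodeA n k) u = n := by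
  induction r with
  | zero => simp [trigB]
  | succ r ih =>
    simp only [trigB_succ, Finset.sum_add_distrib, ih (by omega), ← Finset.mul_sum, ← Finset.sum_mul]
    rw [node_cos_sum_zero n (r + 1) hn (fun h => by have := Nat.le_of_dvd (by omega) h; omega)]
    simp

lemma node_trigB_sum_large (n r : ℕ) (hn : 0 < n) (hr0 : 2 * n ≤ r) (hr : r < 4 * n) (u : ℝ) :
    ∑ k ∈ Finset.Icc 1 n, trigB r (nodeA n k) u ≤ 3 * n := by
  have : ∑ k ∈ Finset.Icc 1 n, trigB r (nodeA n k) u = n - 2 * n * Real.cos (((2 * n : ℕ) : ℝ) * u) := by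
    induction r, hr0 using Nat.le_induction with
    | base =>
      obtain ⟨q, hq⟩ : ∃ q, 2 * n = q + 1 := ⟨2 * n - 1, by omega⟩
      have h2 := node_cos_sum_two n hn
      have h1 := node_trigB_sum_small n q hn (by omega) u
      rw [hq] at h2 ⊢
      simp only [trigB_succ, Finset.sum_add_distrib, ← Finset.mul_sum, ← Finset.sum_mul, h1, h2]
      ring
    | succ r hr1 ih =>
      simp only [trigB_succ, Finset.sum_add_distrib, ih (by omega), ← Finset.mul_sum, ← Finset.sum_mul]
      rw [node_cos_sum_zero n (r + 1) hn ?_]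
      · simp
      · rintro ⟨c, hc⟩
        have : c < 2 := by
          by_contra h
          have : 2 * n * 2 ≤ 2 * n * c := Nat.mul_le_mul_left _ (by omega)
          omega
        interval_cases c <;> omega
  rw [this]
  have := Real.neg_one_le_cos (((2 * n : ℕ) : ℝ) * u)
  have hn0 : (0 : ℝ) ≤ n := by positivity
  nlinarith

lemma node_kernel_bound (n : ℕ) (hn : 0 < n) (u : ℝ) :
    ∑ k ∈ Finset.Icc 1 n, |∑ r ∈ Finset.Ico (2 * n) (4 * n), trigB r (nodeA n k) u| ≤ 10 * (n : ℝ) ^ 2 := by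
  have h1 : ∀ k ∈ Finset.Icc 1 n, |∑ r ∈ Finset.Ico (2 * n) (4 * n), trigB r (nodeA n k) u| ≤
      2 * ∑ r ∈ Finset.range (2 * n), trigB r (nodeA n k) u +
        ∑ r ∈ Finset.Ico (2 * n) (4 * n), trigB r (nodeA n k) u := by
    intro k _
    have a := fejer_nonneg (2 * n) (nodeA n k) u
    have b := fejer_nonneg (4 * n) (nodeA n k) u
    have c := Finset.sum_range_add_sum_Ico (fun r => trigB r (nodeA n k) u) (show 2 * n ≤ 4 * n by omega)
    rw [abs_le]; constructor <;> linarith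
  refine (Finset.sum_le_sum h1).trans ?_
  rw [Finset.sum_add_distrib, ← Finset.mul_sum, Finset.sum_comm]
  rw [Finset.sum_comm (s := Finset.Icc 1 n) (t := Finset.Ico (2 * n) (4 * n))]
  have a : ∑ r ∈ Finset.range (2 * n), ∑ k ∈ Finset.Icc 1 n, trigB r (nodeA n k) u = ∑ r ∈ Finset.range (2 * n), (n : ℝ) :=
    Finset.sum_congr rfl fun r hr => node_trigB_sum_small n r hn (Finset.mem_range.mp hr) u
  have b : ∑ r ∈ Finset.Ico (2 * n) (4 * n), ∑ k ∈ Finset.Icc 1 n, trigB r (nodeA n k) u ≤ ∑ r ∈ Finset.Ico (2 * n) (4 * n), (3 * n : ℝ) :=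
    Finset.sum_le_sum fun r hr => node_trigB_sum_large n r hn (Finset.mem_Ico.mp hr).1 (Finset.mem_Ico.mp hr).2 u
  simp only [Finset.sum_const, Finset.card_range, Nat.card_Ico, nsmul_eq_mul] at a b
  rw [show 4 * n - 2 * n = 2 * n by omega] at b
  rw [a]
  push_cast at b ⊢
  nlinarith

lemma integral_cos_int (a : ℤ) (ha : a ≠ 0) : ∫ u in (0 : ℝ)..Real.pi, Real.cos ((a : ℝ) * u) = 0 := by
  have ha' : (a : ℝ) ≠ 0 := by exact_mod_cast ha
  rw [intervalIntegral.integral_comp_mul_left (fun x => Real.cos x) ha', integral_cos]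
  simp [Real.sin_int_mul_pi]

lemma integral_cos_cos (a b : ℕ) (ha : 0 < a) : ∫ u in (0 : ℝ)..Real.pi, Real.cos ((a : ℝ) * u) * Real.cos ((b : ℝ) * u)
    = if a = b then Real.pi / 2 else 0 := by
  have e : ∀ u : ℝ, Real.cos ((a : ℝ) * u) * Real.cos ((b : ℝ) * u) =
      (Real.cos (((a - b : ℤ) : ℝ) * u) + Real.cos (((a + b : ℤ) : ℝ) * u)) / 2 := by
    intro u; push_cast; rw [sub_mul, add_mul, Real.cos_sub, Real.cos_add]; ring
  simp only [e]
  rw [intervalIntegral.integral_div, intervalIntegral.integral_add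
    (Continuous.intervalIntegrable (by fun_prop) _ _) (Continuous.intervalIntegrable (by fun_prop) _ _),
    integral_cos_int (a + b) (by omega)]
  split_ifs with h
  · subst h; simp
  · rw [integral_cos_int (a - b) (by omega)]; simp

lemma trigB_continuous (r : ℕ) (t : ℝ) : Continuous (fun u => trigB r t u) := by
  unfold trigB; fun_prop

lemma integral_cos_trigB (a R : ℕ) (ha : 0 < a) (haR : a ≤ R) (t : ℝ) :
    ∫ u in (0 : ℝ)..Real.pi, Real.cos ((a : ℝ) * u) * trigB R t u = Real.pi * Real.cos (a * t) := by
  have e : ∀ u : ℝ, Real.cos ((a : ℝ) * u) * trigB R t u = Real.cos ((a : ℝ) * u) * Real.cos (((0 : ℕ) : ℝ) * u) +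
      ∑ l ∈ Finset.range R, 2 * Real.cos (((l + 1 : ℕ) : ℝ) * t) * (Real.cos ((a : ℝ) * u) * Real.cos (((l + 1 : ℕ) : ℝ) * u)) := by
    intro u
    unfold trigB
    rw [mul_add, Finset.mul_sum, Finset.mul_sum]
    simp only [Nat.cast_zero, zero_mul, Real.cos_zero]
    congr 1
    exact Finset.sum_congr rfl fun _ _ => by ring
  simp only [e]
  rw [intervalIntegral.integral_add
    (Continuous.intervalIntegrable (by fun_prop) _ _) (Continuous.intervalIntegrable (by fun_prop) _ _),
    intervalIntegral.integral_finsetSum (fun _ _ => Continuous.intervalIntegrable (by fun_prop) _ _)]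
  simp only [intervalIntegral.integral_const_mul, integral_cos_cos a _ ha]
  rw [if_neg (by omega), Finset.sum_eq_single (a - 1)]
  · rw [if_pos (by omega), show a - 1 + 1 = a by omega]; ring
  · intro b _ hb
    rw [if_neg (by omega)]; simp
  · intro h; exact absurd (Finset.mem_range.mpr (by omega)) h

lemma integral_trigB (R : ℕ) (t : ℝ) :
    ∫ u in (0 : ℝ)..Real.pi, trigB R t u = Real.pi := by
  unfold trigB
  rw [intervalIntegral.integral_add
    (Continuous.intervalIntegrable (by fun_prop) _ _) (Continuous.intervalIntegrable (by fun_prop) _ _),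
    intervalIntegral.integral_const_mul,
    intervalIntegral.integral_finsetSum (fun _ _ => Continuous.intervalIntegrable (by fun_prop) _ _)]
  simp only [intervalIntegral.integral_const_mul]
  rw [Finset.sum_eq_zero]
  · simp
  · intro l _
    have := integral_cos_int ((l + 1 : ℕ) : ℤ) (by omega)
    rw [Int.cast_natCast] at this
    rw [this, mul_zero]

lemma trigB_reproduce (r R : ℕ) (h : r ≤ R) (s t : ℝ) :
    ∫ u in (0 : ℝ)..Real.pi, trigB r s u * trigB R t u = Real.pi * trigB r s t := by
  have hc := trigB_continuous
  induction r with
  | zero => simp [trigB, -Nat.cast_add]; simpa [trigB] using integral_trigB R t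
  | succ r ih =>
    simp only [trigB_succ]
    have e : ∀ u, (trigB r s u + 2 * (Real.cos (((r + 1 : ℕ) : ℝ) * s) * Real.cos (((r + 1 : ℕ) : ℝ) * u))) * trigB R t u
        = trigB r s u * trigB R t u + 2 * Real.cos (((r + 1 : ℕ) : ℝ) * s) * (Real.cos (((r + 1 : ℕ) : ℝ) * u) * trigB R t u) := by
      intro u; ring
    simp only [e]
    rw [intervalIntegral.integral_add
      (Continuous.intervalIntegrable (by fun_prop) _ _) (Continuous.intervalIntegrable (by fun_prop) _ _),
      ih (by omega), intervalIntegral.integral_const_mul, integral_cos_trigB _ _ (by omega) h]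
    ring

/-- Trigonometric form of the VP kernel. -/
noncomputable def vpT (n m : ℕ) (s u : ℝ) : ℝ :=
  (1 / (2 * (m : ℝ))) * ∑ r ∈ Finset.Icc (n - m) (n + m - 1), (1 / Real.pi) * trigB r s u

lemma vpT_continuous (n m : ℕ) (s : ℝ) : Continuous (fun u => vpT n m s u) := by
  have := trigB_continuous
  unfold vpT; fun_prop

lemma vpT_comm (n m : ℕ) (s u : ℝ) : vpT n m s u = vpT n m u s := by
  unfold vpT
  simp only [trigB_comm _ s u]

lemma darboux_eq (r : ℕ) (x y : ℝ) :
    darboux r x y = (1 / Real.pi) * trigB r (Real.arccos x) (Real.arccos y) := by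
  unfold darboux trigB
  rw [Finset.sum_range_succ']
  have h1 : Real.sqrt (1 / Real.pi) * Real.sqrt (1 / Real.pi) = 1 / Real.pi :=
    Real.mul_self_sqrt (by positivity)
  have h2 : Real.sqrt (2 / Real.pi) * Real.sqrt (2 / Real.pi) = 2 / Real.pi :=
    Real.mul_self_sqrt (by positivity)
  have : ∀ l : ℕ, chebP (l + 1) x * chebP (l + 1) y = 2 / Real.pi *
      (Real.cos (((l + 1 : ℕ) : ℝ) * Real.arccos x) * Real.cos (((l + 1 : ℕ) : ℝ) * Real.arccos y)) := by
    intro l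
    simp only [chebP, Nat.add_one_ne_zero, if_false]
    rw [mul_mul_mul_comm, h2]
  simp only [this, ← Finset.mul_sum]
  simp only [chebP, if_true, h1]
  ring

lemma vpK_eq (n m : ℕ) (x y : ℝ) : vpK n m x y = vpT n m (Real.arccos x) (Real.arccos y) := by
  unfold vpK vpT
  simp only [darboux_eq]

lemma nodeA_mem (n k : ℕ) (h1 : 1 ≤ k) (h2 : k ≤ n) : 0 ≤ nodeA n k ∧ nodeA n k ≤ Real.pi := by
  have hn : (0 : ℝ) < n := by have : 0 < n := by omega
                              exact_mod_cast this
  have h1' : (1 : ℝ) ≤ k := by exact_mod_cast h1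
  have h2' : (k : ℝ) ≤ n := by exact_mod_cast h2
  have hpi := Real.pi_pos
  unfold nodeA
  constructor
  · apply div_nonneg (mul_nonneg (by linarith) hpi.le) (by linarith)
  · rw [div_le_iff₀ (by linarith)]; nlinarith

lemma arccos_chebNode (n k : ℕ) (h1 : 1 ≤ k) (h2 : k ≤ n) : Real.arccos (chebNode n k) = nodeA n k := by
  have := nodeA_mem n k h1 h2
  exact Real.arccos_cos this.1 this.2

lemma vpT_reproduce (n m : ℕ) (hmn : m < n) (s t : ℝ) :
    ∫ u in (0 : ℝ)..Real.pi, vpT n m s u * ∑ R ∈ Finset.Ico (2 * n) (4 * n), trigB R t u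
      = 2 * n * Real.pi * vpT n m s t := by
  have hc := trigB_continuous
  have hv := vpT_continuous
  have h1 : ∀ R ∈ Finset.Ico (2 * n) (4 * n), ∫ u in (0 : ℝ)..Real.pi, vpT n m s u * trigB R t u
      = Real.pi * vpT n m s t := by
    intro R hR
    have hR' := (Finset.mem_Ico.mp hR).1
    have e : ∀ u, vpT n m s u * trigB R t u = (1 / (2 * (m : ℝ))) *
        ∑ r ∈ Finset.Icc (n - m) (n + m - 1), (1 / Real.pi) * (trigB r s u * trigB R t u) := by
      intro u
      unfold vpT
      rw [mul_assoc, Finset.sum_mul]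
      simp only [mul_assoc]
    simp only [e]
    rw [intervalIntegral.integral_const_mul,
      intervalIntegral.integral_finsetSum (fun _ _ => Continuous.intervalIntegrable (by fun_prop) _ _)]
    simp only [intervalIntegral.integral_const_mul]
    rw [Finset.sum_congr rfl (fun r hr => by
      rw [trigB_reproduce r R (by have := (Finset.mem_Icc.mp hr).2; omega) s t])]
    unfold vpT
    simp only [← Finset.mul_sum]
    ring
  simp only [Finset.mul_sum]
  rw [intervalIntegral.integral_finsetSum (fun _ _ => Continuous.intervalIntegrable (by fun_prop) _ _),
    Finset.sum_congr rfl h1, Finset.sum_const, Nat.card_Ico, show 4 * n - 2 * n = 2 * n by omega, nsmul_eq_mul]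
  push_cast; ring

lemma vpT_node_sum (n m : ℕ) (hmn : m < n) (s : ℝ) :
    Real.pi / n * ∑ k ∈ Finset.Icc 1 n, |vpT n m s (nodeA n k)| ≤
      5 * ∫ u in (0 : ℝ)..Real.pi, |vpT n m s u| := by
  have hc := trigB_continuous
  have hv := vpT_continuous
  have hn : 0 < n := by omega
  have hn' : (0 : ℝ) < n := by exact_mod_cast hn
  have hpi := Real.pi_pos
  have h1 : ∀ k ∈ Finset.Icc 1 n, 2 * n * Real.pi * |vpT n m s (nodeA n k)| ≤
      ∫ u in (0 : ℝ)..Real.pi, |vpT n m s u| * |∑ R ∈ Finset.Ico (2 * n) (4 * n), trigB R (nodeA n k) u| := by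
    intro k _
    have e := vpT_reproduce n m hmn s (nodeA n k)
    have : 2 * n * Real.pi * |vpT n m s (nodeA n k)| = |2 * n * Real.pi * vpT n m s (nodeA n k)| := by
      rw [abs_mul, abs_of_nonneg (by positivity : 0 ≤ 2 * n * Real.pi)]
    rw [this, ← e]
    simp only [← abs_mul]
    exact intervalIntegral.abs_integral_le_integral_abs hpi.le
  have h2 := Finset.sum_le_sum h1
  rw [← Finset.mul_sum, ← intervalIntegral.integral_finsetSum
    (fun _ _ => Continuous.intervalIntegrable (by fun_prop) _ _)] at h2
  have h3 : ∫ u in (0 : ℝ)..Real.pi, ∑ k ∈ Finset.Icc 1 n,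
      |vpT n m s u| * |∑ R ∈ Finset.Ico (2 * n) (4 * n), trigB R (nodeA n k) u| ≤
      ∫ u in (0 : ℝ)..Real.pi, |vpT n m s u| * (10 * (n : ℝ) ^ 2) := by
    apply intervalIntegral.integral_mono_on hpi.le
    · exact Continuous.intervalIntegrable (by fun_prop) _ _
    · exact Continuous.intervalIntegrable (by fun_prop) _ _
    · intro u _
      rw [← Finset.mul_sum]
      exact mul_le_mul_of_nonneg_left (node_kernel_bound n hn u) (abs_nonneg _)
  rw [intervalIntegral.integral_mul_const] at h3
  have h4 := h2.trans h3
  set S := ∑ k ∈ Finset.Icc 1 n, |vpT n m s (nodeA n k)|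
  set I := ∫ u in (0 : ℝ)..Real.pi, |vpT n m s u|
  rw [div_mul_eq_mul_div, div_le_iff₀ hn']
  have : (2 * n) * (Real.pi * S) ≤ (2 * n) * (5 * I * n) := by linarith
  exact le_of_mul_le_mul_left this (by positivity)

lemma integral_vpK (n m : ℕ) (x : ℝ) : ∫ y in (-1 : ℝ)..1, |vpK n m x y| * chebW y =
    ∫ u in (0 : ℝ)..Real.pi, |vpT n m (Real.arccos x) u| := by
  have h1 := Polynomial.Chebyshev.integral_measureT (fun y => |vpK n m x y|)
  rw [Polynomial.Chebyshev.integral_measureT_eq_integral_cos] at h1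
  simp only [chebW, one_div]
  simp only [Real.sqrt_inv] at h1
  rw [← h1]
  apply intervalIntegral.integral_congr
  intro u hu
  rw [Set.uIcc_of_le Real.pi_pos.le] at hu
  simp only [vpK_eq, Real.arccos_cos hu.1 hu.2]

lemma trigB_abs_le (r : ℕ) (t u : ℝ) : |trigB r t u| ≤ 1 + 2 * r := by
  unfold trigB
  refine (abs_add_le _ _).trans ?_
  rw [abs_one, abs_mul, abs_two]
  gcongr
  refine (Finset.abs_sum_le_sum_abs _ _).trans ?_
  have : ∀ l ∈ Finset.range r, |Real.cos (((l + 1 : ℕ) : ℝ) * t) * Real.cos (((l + 1 : ℕ) : ℝ) * u)| ≤ 1 := by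
    intro l _
    rw [abs_mul]
    exact mul_le_one₀ (Real.abs_cos_le_one _) (abs_nonneg _) (Real.abs_cos_le_one _)
  refine (Finset.sum_le_sum this).trans ?_
  simp

lemma vpT_abs_le (n m : ℕ) : ∃ C, ∀ s u, |vpT n m s u| ≤ C := by
  refine ⟨|1 / (2 * (m : ℝ))| * ∑ r ∈ Finset.Icc (n - m) (n + m - 1), |1 / Real.pi| * (1 + 2 * r), ?_⟩
  intro s u
  unfold vpT
  rw [abs_mul]
  refine mul_le_mul_of_nonneg_left ((Finset.abs_sum_le_sum_abs _ _).trans (Finset.sum_le_sum ?_)) (abs_nonneg _)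
  intro r _
  rw [abs_mul]
  exact mul_le_mul_of_nonneg_left (trigB_abs_le r s u) (abs_nonneg _)

lemma le_cInf (n m : ℕ) (x : ℝ) (hx : x ∈ Set.Icc (-1 : ℝ) 1) :
    ∫ u in (0 : ℝ)..Real.pi, |vpT n m (Real.arccos x) u| ≤ cInf n m := by
  obtain ⟨C, hC⟩ := vpT_abs_le n m
  have hv := vpT_continuous
  rw [← integral_vpK]
  unfold cInf
  refine le_ciSup (f := fun x : Set.Icc (-1 : ℝ) 1 => ∫ y in (-1 : ℝ)..1, |vpK n m x y| * chebW y) ?_ ⟨x, hx⟩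
  refine ⟨∫ u in (0 : ℝ)..Real.pi, C, ?_⟩
  rintro _ ⟨z, rfl⟩
  simp only [integral_vpK]
  apply intervalIntegral.integral_mono_on Real.pi_pos.le
  · exact Continuous.intervalIntegrable (by fun_prop) _ _
  · exact Continuous.intervalIntegrable (by fun_prop) _ _
  · intro u _
    exact hC _ _

lemma dirK_node (n : ℕ) (hn : 0 < n) (j : ℤ) (hj : ¬ (2 * (n : ℤ)) ∣ j) :
    dirK (n - 1) ((j : ℝ) * Real.pi / n) = - (-1) ^ j := by
  have hn' : (n : ℝ) ≠ 0 := by positivity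
  have h := dirK_sin (n - 1) ((j : ℝ) * Real.pi / n)
  have h0 := sin_int_ne n hn j hj
  have e : (j : ℝ) * Real.pi / n / 2 = (j : ℝ) * Real.pi / (2 * n) := by field_simp
  have e2 : ((n - 1 : ℕ) : ℝ) * ((j : ℝ) * Real.pi / n) + (j : ℝ) * Real.pi / (2 * n)
      = j * Real.pi - (j : ℝ) * Real.pi / (2 * n) := by
    rw [Nat.cast_sub hn]; field_simp; push_cast; ring
  rw [e, e2, Real.sin_sub, Real.sin_int_mul_pi, Real.cos_int_mul_pi] at h
  apply mul_left_cancel₀ h0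
  rw [h]; ring

lemma trigB_node (n k h : ℕ) (hk1 : 1 ≤ k) (hk : k ≤ n) (hh1 : 1 ≤ h) (hh : h ≤ n) :
    trigB (n - 1) (nodeA n k) (nodeA n h) = if k = h then (n : ℝ) else 0 := by
  have hn : 0 < n := by omega
  have hn' : (n : ℝ) ≠ 0 := by positivity
  have e1 : nodeA n k - nodeA n h = (((k : ℤ) - h : ℤ) : ℝ) * Real.pi / n := by
    unfold nodeA; push_cast; field_simp; ring
  have e2 : nodeA n k + nodeA n h = (((k : ℤ) + h - 1 : ℤ) : ℝ) * Real.pi / n := by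
    unfold nodeA; push_cast; field_simp; ring
  rw [trigB_eq_dirK, e1, e2, dirK_node n hn (k + h - 1) (fun hd => by
    have := Int.le_of_dvd (by omega) hd; omega)]
  split_ifs with hkh
  · subst hkh
    have : Odd ((k : ℤ) + k - 1) := ⟨k - 1, by ring⟩
    rw [this.neg_one_zpow]
    simp [dirK]
    rw [Nat.cast_sub hn]; push_cast; ring
  · rw [dirK_node n hn _ (fun hd => by
      rcases lt_or_gt_of_ne hkh with h' | h'
      · have := Int.le_of_dvd (a := 2 * (n : ℤ)) (b := h - k) (by omega) (by rw [← neg_sub]; exact hd.neg_right)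
        omega
      · have := Int.le_of_dvd (by omega) hd
        omega)]
    have : (k : ℤ) + h - 1 = (k - h) + (2 * h - 1) := by ring
    rw [this, zpow_add₀ (by norm_num)]
    have : Odd (2 * (h : ℤ) - 1) := ⟨h - 1, by ring⟩
    rw [this.neg_one_zpow]; ring

lemma cos_node_reflect (n k j : ℕ) (hn : 0 < n) (hj : j ≤ n) :
    Real.cos (((n + j : ℕ) : ℝ) * nodeA n k) = - Real.cos (((n - j : ℕ) : ℝ) * nodeA n k) := by
  have hn' : (n : ℝ) ≠ 0 := by positivity
  have h0 : Real.cos (n * nodeA n k) = 0 := by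
    have : n * nodeA n k = k * Real.pi - Real.pi / 2 := by unfold nodeA; field_simp
    rw [this, Real.cos_sub_pi_div_two, Real.sin_nat_mul_pi]
  rw [Nat.cast_sub hj, Nat.cast_add, add_mul, sub_mul, Real.cos_add, Real.cos_sub, h0]; ring

lemma trigB_pair (n k h i : ℕ) (hi : i < n) :
    trigB (n - 1 - i) (nodeA n k) (nodeA n h) + trigB (n + i) (nodeA n k) (nodeA n h)
      = 2 * trigB (n - 1) (nodeA n k) (nodeA n h) := by
  induction i with
  | zero =>
    obtain ⟨q, rfl⟩ : ∃ q, n = q + 1 := ⟨n - 1, by omega⟩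
    have h0 := cos_node_reflect (q + 1) k 0 (by omega) (by omega)
    simp only [add_zero, Nat.sub_zero] at h0 ⊢
    have : Real.cos (((q + 1 : ℕ) : ℝ) * nodeA (q + 1) k) = 0 := by linarith
    rw [trigB_succ, this]; simp; ring
  | succ i ih =>
    have ih := ih (by omega)
    rw [show n - 1 - i = (n - 1 - (i + 1)) + 1 by omega, trigB_succ] at ih
    rw [← add_assoc n i 1, trigB_succ, show n + i + 1 = n + (i + 1) by omega,
      cos_node_reflect n k (i + 1) (by omega) (by omega), cos_node_reflect n h (i + 1) (by omega) (by omega)]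
    rw [show n - 1 - (i + 1) + 1 = n - (i + 1) by omega] at ih
    linarith

lemma sum_Icc_pair (f : ℕ → ℝ) (n m : ℕ) (hm : 0 < m) (hmn : m < n) :
    ∑ r ∈ Finset.Icc (n - m) (n + m - 1), f r = ∑ i ∈ Finset.range m, (f (n - 1 - i) + f (n + i)) := by
  have e : Finset.Icc (n - m) (n + m - 1) = Finset.Ico (n - m) (n + m) := by
    ext a; simp only [Finset.mem_Icc, Finset.mem_Ico]; omega
  rw [e]
  clear e hm
  induction m with
  | zero => simp
  | succ m ih =>
    rw [Finset.sum_range_succ, ← ih (by omega), ← add_assoc n m 1, Finset.sum_Ico_succ_top (by omega),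
      Finset.sum_eq_sum_Ico_succ_bot (by omega), show n - (m + 1) + 1 = n - m by omega,
      show n - 1 - m = n - (m + 1) by omega]
    ring

lemma vpT_node (n m k h : ℕ) (hm : 0 < m) (hmn : m < n) (hk1 : 1 ≤ k) (hk : k ≤ n) (hh1 : 1 ≤ h) (hh : h ≤ n) :
    Real.pi / n * vpT n m (nodeA n k) (nodeA n h) = if k = h then 1 else 0 := by
  have hn' : (n : ℝ) ≠ 0 := by have : n ≠ 0 := by omega
                               exact_mod_cast this
  have hm' : (m : ℝ) ≠ 0 := by positivity
  have hpi := Real.pi_ne_zero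
  unfold vpT
  rw [← Finset.mul_sum, sum_Icc_pair _ n m hm hmn,
    Finset.sum_congr rfl (fun i hi => trigB_pair n k h i (by have := Finset.mem_range.mp hi; omega)),
    trigB_node n k h hk1 hk hh1 hh]
  simp only [Finset.sum_const, Finset.card_range, nsmul_eq_mul]
  split_ifs
  · field_simp
  · simp

theorem scal_uniform_riesz_bounds (n m : ℕ) (hm : 0 < m) (hmn : m < n) (a : ℕ → ℝ) :
    ((Finset.Icc 1 n).sup' (Finset.nonempty_Icc.mpr (by omega)) fun k => |a k|) ≤
        supNorm (fun x => ∑ k ∈ Finset.Icc 1 n, a k * scal n m k x) ∧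
      supNorm (fun x => ∑ k ∈ Finset.Icc 1 n, a k * scal n m k x) ≤
        cInf n m * (1 + 2 * Real.pi * ((n : ℝ) + (m : ℝ) - 1) / (n : ℝ)) *
          ((Finset.Icc 1 n).sup' (Finset.nonempty_Icc.mpr (by omega)) fun k => |a k|) := by
  have hn : 0 < n := by omega
  have hn' : (0 : ℝ) < n := by exact_mod_cast hn
  have hpi := Real.pi_pos
  set A := (Finset.Icc 1 n).sup' (Finset.nonempty_Icc.mpr (by omega)) fun k => |a k| with hA
  have hAk : ∀ k ∈ Finset.Icc 1 n, |a k| ≤ A := fun k hk =>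
    Finset.le_sup' (fun k => |a k|) hk
  have hA0 : 0 ≤ A := (abs_nonneg _).trans (hAk 1 (Finset.mem_Icc.mpr ⟨le_rfl, hn⟩))
  have hc0 : 0 ≤ cInf n m := le_trans
    (intervalIntegral.integral_nonneg hpi.le (fun _ _ => abs_nonneg _)) (le_cInf n m 0 (by simp))
  have hsc : ∀ k ∈ Finset.Icc 1 n, ∀ x, scal n m k x = Real.pi / n * vpT n m (nodeA n k) (Real.arccos x) := by
    intro k hk x
    have := Finset.mem_Icc.mp hk
    rw [scal, vpK_eq, arccos_chebNode n k this.1 this.2]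
  have hbound : ∀ x : Set.Icc (-1 : ℝ) 1, |∑ k ∈ Finset.Icc 1 n, a k * scal n m k x| ≤
      cInf n m * (1 + 2 * Real.pi * ((n : ℝ) + (m : ℝ) - 1) / (n : ℝ)) * A := by
    intro x
    have h5 : 5 ≤ 1 + 2 * Real.pi * ((n : ℝ) + (m : ℝ) - 1) / (n : ℝ) := by
      have hm1 : (1 : ℝ) ≤ m := by exact_mod_cast hm
      have : 4 ≤ 2 * Real.pi * ((n : ℝ) + (m : ℝ) - 1) / (n : ℝ) := by
        rw [le_div_iff₀ hn']
        have := Real.pi_gt_three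
        nlinarith
      linarith
    calc |∑ k ∈ Finset.Icc 1 n, a k * scal n m k x|
        ≤ ∑ k ∈ Finset.Icc 1 n, |a k * scal n m k x| := Finset.abs_sum_le_sum_abs _ _
      _ ≤ ∑ k ∈ Finset.Icc 1 n, A * (Real.pi / n * |vpT n m (Real.arccos x) (nodeA n k)|) := by
          apply Finset.sum_le_sum
          intro k hk
          rw [abs_mul, hsc k hk, abs_mul, vpT_comm, abs_of_nonneg (by positivity : 0 ≤ Real.pi / (n : ℝ))]
          exact mul_le_mul_of_nonneg_right (hAk k hk) (by positivity)
      _ = A * (Real.pi / n * ∑ k ∈ Finset.Icc 1 n, |vpT n m (Real.arccos x) (nodeA n k)|) := by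
          rw [← Finset.mul_sum, ← Finset.mul_sum]
      _ ≤ A * (5 * cInf n m) := by
          apply mul_le_mul_of_nonneg_left _ hA0
          exact (vpT_node_sum n m hmn _).trans
            (mul_le_mul_of_nonneg_left (le_cInf n m x x.2) (by norm_num))
      _ = cInf n m * 5 * A := by ring
      _ ≤ _ := by gcongr
  refine ⟨?_, ?_⟩
  · refine Finset.sup'_le _ _ ?_
    intro h hh
    have hh' := Finset.mem_Icc.mp hh
    have hx : chebNode n h ∈ Set.Icc (-1 : ℝ) 1 := ⟨Real.neg_one_le_cos _, Real.cos_le_one _⟩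
    have hval : ∑ k ∈ Finset.Icc 1 n, a k * scal n m k (chebNode n h) = a h := by
      rw [Finset.sum_eq_single h]
      · rw [hsc h hh, arccos_chebNode n h hh'.1 hh'.2, vpT_node n m h h hm hmn hh'.1 hh'.2 hh'.1 hh'.2]
        simp
      · intro k hk hne
        have hk' := Finset.mem_Icc.mp hk
        rw [hsc k hk, arccos_chebNode n h hh'.1 hh'.2, vpT_node n m k h hm hmn hk'.1 hk'.2 hh'.1 hh'.2]
        simp [hne]
      · intro h'; exact absurd hh h'
    unfold supNorm
    have := le_ciSup (f := fun x : Set.Icc (-1 : ℝ) 1 => |∑ k ∈ Finset.Icc 1 n, a k * scal n m k x|)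
      ⟨_, by rintro _ ⟨z, rfl⟩; exact hbound z⟩ ⟨chebNode n h, hx⟩
    simp only [hval] at this
    exact this
  · unfold supNorm
    haveI : Nonempty (Set.Icc (-1 : ℝ) 1) := ⟨⟨0, by simp⟩⟩
    exact ciSup_le hbound
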